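/- arXiv:2212.03493 — 2 statements merged into one kernel-verified Lean document; each statement's English description precedes it below -/
import Mathlib

section
/- Let 0 < α < 1, β ∈ ℝ, and let μ satisfy απ/2 < μ < min{π, απ}. Then there exists a constant C = C(α, β, μ) > 0 such that |E_{α,β}(z)| ≤ C / (1 + |z|) for all nonzero z ∈ ℂ with μ ≤ |arg(z)| ≤ π. -/
/-- The Mittag-Leffler function `E_{α,β}(z) = ∑ₖ zᵏ / Γ(αk + β)` (with the
convention that `1/Γ` vanishes at the poles of `Γ`, which holds for Mathlib's
`Complex.Gamma` since it vanishes at nonpositive integers). -/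
noncomputable def mittagLeffler (α β : ℝ) (z : ℂ) : ℂ :=
  ∑' k : ℕ, z ^ k / Complex.Gamma ((α * k + β : ℝ) : ℂ)

/-!
On the line `Re t = 1`, inverting the Laplace transform of `x ^ (s - 1)` gives
`1 / Γ(s) = (2πi)⁻¹ ∫ eᵗ t⁻ˢ dt` for `s > 1`. Summing a geometric series turns this into
`E_{α,β}(z) = (2πi)⁻¹ ∫ eᵗ t^(-β) / (1 - z t^(-α)) dt` for `β > 1` and `|z| < 1`, and analytic
continuation along rays extends it to `|arg z| > απ/2`: there `|arg t^α| ≤ απ/2` keeps `t^α` at a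
positive angle from `z`. The same angle makes the denominator at least a multiple of
`1 + |z t^(-α)|`, so `E_{α,β}(z) = O(1 / (1 + |z|))` as soon as `∫ |t|^(α - β) |dt|` converges,
that is for `β > 1 + α`. Finally `E_{α,β} = β E_{α,β+1} + α z E_{α,β+1}'`, with Cauchy's estimate in
a slightly larger sector, lowers `β` by one as often as needed.
-/

open Complex MeasureTheory Set Filter Topology Asymptotics InnerProductGeometry
open scoped Real FourierTransform

/-! ### Sectors about the negative real axis -/

theorem sin_half_mul_norm_add_norm_le_norm_sub {V : Type*} [NormedAddCommGroup V]
    [InnerProductSpace ℝ V] {θ : ℝ} (hθ : 0 ≤ θ) {x y : V} (h : θ ≤ angle x y) :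
    Real.sin (θ / 2) * (‖x‖ + ‖y‖) ≤ ‖x - y‖ := by
  have hcos : Real.cos (angle x y) ≤ Real.cos θ :=
    Real.cos_le_cos_of_nonneg_of_le_pi hθ (angle_le_pi x y) h
  have hθ_half : Real.cos θ = 2 * Real.cos (θ / 2) ^ 2 - 1 := by
    rw [← Real.cos_two_mul, mul_div_cancel₀ θ two_ne_zero]
  refine le_of_sq_le_sq ?_ (norm_nonneg _)
  calc (Real.sin (θ / 2) * (‖x‖ + ‖y‖)) ^ 2
      ≤ (Real.sin (θ / 2) * (‖x‖ + ‖y‖)) ^ 2 + (Real.cos (θ / 2) * (‖x‖ - ‖y‖)) ^ 2 :=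
        le_add_of_nonneg_right (sq_nonneg _)
    _ = ‖x‖ * ‖x‖ + ‖y‖ * ‖y‖ - 2 * ‖x‖ * ‖y‖ * Real.cos θ := by
        rw [mul_pow, Real.sin_sq, hθ_half]; ring
    _ ≤ ‖x‖ * ‖x‖ + ‖y‖ * ‖y‖ - 2 * ‖x‖ * ‖y‖ * Real.cos (angle x y) := by gcongr
    _ = ‖x - y‖ ^ 2 := by
        rw [sq, norm_sub_sq_eq_norm_sq_add_norm_sq_sub_two_mul_norm_mul_norm_mul_cos_angle]

theorem abs_arg_sub_abs_arg_le_angle (z : ℂ) {w : ℂ} (hw : w ≠ 0) :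
    |arg z| - |arg w| ≤ angle z w := by
  rcases eq_or_ne z 0 with rfl | hz
  · rw [arg_zero, abs_zero, zero_sub]
    exact (neg_nonpos.2 (abs_nonneg _)).trans (angle_nonneg _ _)
  rw [← angle_one_right hz, ← angle_one_right hw, sub_le_iff_le_add]
  exact angle_le_angle_add_angle z w 1

theorem abs_arg_exp_le (z : ℂ) : |arg (exp z)| ≤ |z.im| := by
  rcases le_or_gt |z.im| π with h | h
  · rcases (neg_le_of_abs_le h).eq_or_lt with h' | h'
    · exact (abs_arg_le_pi _).trans (by rw [← h', abs_neg, abs_of_pos Real.pi_pos])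
    · rw [← log_im, log_exp h' (le_of_abs_le h)]
  · exact (abs_arg_le_pi _).trans h.le

theorem abs_arg_cpow_ofReal_le (z : ℂ) (a : ℝ) : |arg (z ^ (a : ℂ))| ≤ |a| * |arg z| := by
  rcases eq_or_ne z 0 with rfl | hz
  · by_cases ha : a = 0 <;> simp [ha]
  · rw [cpow_def_of_ne_zero hz]
    refine (abs_arg_exp_le _).trans_eq ?_
    rw [im_mul_ofReal, log_im, abs_mul, mul_comm]

/-- The sector `μ ≤ |arg z|` about the negative real axis; as `arg 0 = 0`, it contains the
origin only for `μ ≤ 0`. -/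
def leftSector (μ : ℝ) : Set ℂ := {z | μ ≤ |arg z|}

theorem ne_zero_of_mem_leftSector {μ : ℝ} (hμ : 0 < μ) {z : ℂ} (hz : z ∈ leftSector μ) :
    z ≠ 0 := by
  rintro rfl
  exact hμ.not_ge (by simpa [leftSector] using hz)

theorem leftSector_anti : Antitone leftSector := fun _ _ h _ hz => h.trans hz

theorem sin_half_sub_pos {a μ : ℝ} (ha : 0 ≤ a) (haμ : a < μ) {z : ℂ} (hz : z ∈ leftSector μ) :
    0 < Real.sin ((μ - a) / 2) := by
  have hμ : μ ≤ π := le_trans hz (abs_arg_le_pi z)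
  exact Real.sin_pos_of_pos_of_lt_pi (by linarith) (by linarith [Real.pi_pos])

theorem sin_half_sub_mul_le_norm_sub {a μ : ℝ} (haμ : a ≤ μ) {z w : ℂ} (hz : z ∈ leftSector μ)
    (hw : w ≠ 0) (hwa : |arg w| ≤ a) :
    Real.sin ((μ - a) / 2) * (‖z‖ + ‖w‖) ≤ ‖z - w‖ :=
  sin_half_mul_norm_add_norm_le_norm_sub (sub_nonneg.2 haμ) <|
    (sub_le_sub hz hwa).trans (abs_arg_sub_abs_arg_le_angle z hw)

theorem closedBall_subset_leftSector {b μ : ℝ} (hb : 0 ≤ b) (hbμ : b < μ) {z : ℂ}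
    (hz : z ∈ leftSector μ) :
    Metric.closedBall z (Real.sin ((μ - b) / 2) / 2 * ‖z‖) ⊆ leftSector b := by
  intro w hw
  have hz0 : 0 < ‖z‖ := norm_pos_iff.2 (ne_zero_of_mem_leftSector (hb.trans_lt hbμ) hz)
  have hsin := sin_half_sub_pos hb hbμ hz
  have hsin_le := Real.sin_le_one ((μ - b) / 2)
  rw [mem_closedBall_iff_norm, norm_sub_rev] at hw
  have hw0 : w ≠ 0 := by
    rintro rfl
    rw [sub_zero] at hw
    nlinarith
  by_contra hwb
  have hfar := sin_half_sub_mul_le_norm_sub hbμ.le hz hw0 (not_le.1 hwb).le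
  nlinarith [norm_nonneg w]

theorem isBigO_smul_deriv_leftSector {F : Type*} [NormedAddCommGroup F] [NormedSpace ℂ F]
    {f : ℂ → F} {b μ : ℝ} (hb : 0 ≤ b) (hbμ : b < μ) (hf : DifferentiableOn ℂ f (leftSector b))
    (hO : f =O[𝓟 (leftSector b)] fun z => (1 + ‖z‖)⁻¹) :
    (fun z => z • deriv f z) =O[𝓟 (leftSector μ)] fun z => (1 + ‖z‖)⁻¹ := by
  obtain ⟨C, hC0, hC⟩ := hO.exists_pos
  simp only [isBigOWith_principal, Real.norm_eq_abs, abs_inv] at hC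
  set ε := Real.sin ((μ - b) / 2) / 2 with hε
  refine IsBigO.of_bound (2 * C / ε) (eventually_principal.2 fun z hz => ?_)
  have hz0 : 0 < ‖z‖ := norm_pos_iff.2 (ne_zero_of_mem_leftSector (hb.trans_lt hbμ) hz)
  have hε0 : 0 < ε := half_pos (sin_half_sub_pos hb hbμ hz)
  have hε1 : ε ≤ 1 / 2 := by linarith [Real.sin_le_one ((μ - b) / 2)]
  have hball : Metric.closedBall z (ε * ‖z‖) ⊆ leftSector b :=
    closedBall_subset_leftSector hb hbμ hz
  have hsphere : ∀ w ∈ Metric.sphere z (ε * ‖z‖), ‖f w‖ ≤ 2 * C * (1 + ‖z‖)⁻¹ := by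
    intro w hw
    have hzw : 1 + ‖z‖ ≤ 2 * (1 + ‖w‖) := by
      have hdist : ‖z‖ ≤ ‖w‖ + ε * ‖z‖ := by
        rw [← mem_sphere_iff_norm.1 hw]
        exact norm_le_norm_add_norm_sub w z
      nlinarith
    calc ‖f w‖ ≤ C * |1 + ‖w‖|⁻¹ := hC w (hball (Metric.sphere_subset_closedBall hw))
      _ = 2 * C * (2 * (1 + ‖w‖))⁻¹ := by
        rw [abs_of_pos (by positivity)]; field_simp
      _ ≤ 2 * C * (1 + ‖z‖)⁻¹ := by gcongr
  calc ‖z • deriv f z‖ = ‖z‖ * ‖deriv f z‖ := norm_smul _ _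
    _ ≤ ‖z‖ * (2 * C * (1 + ‖z‖)⁻¹ / (ε * ‖z‖)) := by
      gcongr
      exact norm_deriv_le_of_forall_mem_sphere_norm_le (by positivity)
        (hf.diffContOnCl_ball hball) hsphere
    _ = 2 * C / ε * ‖(1 + ‖z‖)⁻¹‖ := by
      rw [Real.norm_of_nonneg (by positivity)]; field_simp

/-! ### Integrals of the kernel `1 / (1 - z q)` -/

section GeometricKernel

variable {X : Type*} [MeasurableSpace X] {ν : Measure X} {f q : X → ℂ} {M : ℝ}

theorem hasSum_integral_div_one_sub_mul (hf : Integrable f ν) (hq : AEStronglyMeasurable q ν)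
    (hM : ∀ x, ‖q x‖ ≤ M) {z : ℂ} (hz : ‖z‖ * M < 1) :
    HasSum (fun k : ℕ => z ^ k * ∫ x, f x * q x ^ k ∂ν) (∫ x, f x / (1 - z * q x) ∂ν) := by
  rcases isEmpty_or_nonempty X with _ | ⟨⟨x₀⟩⟩
  · simp [ν.eq_zero_of_isEmpty, hasSum_zero]
  have hM0 : 0 ≤ M := (norm_nonneg _).trans (hM x₀)
  have hzq : ∀ x, ‖z * q x‖ ≤ ‖z‖ * M := fun x => by
    rw [norm_mul]; gcongr; exact hM x
  have hterm : ∀ (k : ℕ) (x : X), ‖f x * (z * q x) ^ k‖ ≤ (‖z‖ * M) ^ k * ‖f x‖ := fun k x => by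
    rw [norm_mul, norm_pow, mul_comm]; gcongr; exact hzq x
  have hint : ∀ k : ℕ, Integrable (fun x => f x * (z * q x) ^ k) ν := fun k =>
    (hf.norm.const_mul _).mono' (hf.1.mul ((hq.const_mul z).pow k))
      (Eventually.of_forall (hterm k))
  have hsum : Summable fun k : ℕ => ∫ x, ‖f x * (z * q x) ^ k‖ ∂ν := by
    refine Summable.of_nonneg_of_le (fun k => by positivity) (fun k => ?_)
      ((summable_geometric_of_lt_one (by positivity) hz).mul_right (∫ x, ‖f x‖ ∂ν))
    rw [← integral_const_mul]
    exact integral_mono (hint k).norm (hf.norm.const_mul _) (hterm k)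
  have hgeom : ∀ x, ∑' k : ℕ, f x * (z * q x) ^ k = f x / (1 - z * q x) := fun x => by
    rw [tsum_mul_left, tsum_geometric_of_norm_lt_one ((hzq x).trans_lt hz), div_eq_mul_inv]
  have hpow : ∀ k : ℕ, z ^ k * ∫ x, f x * q x ^ k ∂ν = ∫ x, f x * (z * q x) ^ k ∂ν := fun k => by
    rw [← integral_const_mul]
    simp only [mul_pow, mul_left_comm]
  simpa only [hpow, hgeom] using hasSum_integral_of_summable_integral_norm hint hsum

theorem analyticAt_integral_div_one_sub_mul (hf : Integrable f ν) (hq : AEStronglyMeasurable q ν)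
    (hM : ∀ x, ‖q x‖ ≤ M) {δ : ℝ} (hδ : 0 < δ) {z₀ : ℂ} (h : ∀ x, δ ≤ ‖1 - z₀ * q x‖) :
    AnalyticAt ℂ (fun z => ∫ x, f x / (1 - z * q x) ∂ν) z₀ := by
  have hden : AEStronglyMeasurable (fun x => (1 - z₀ * q x)⁻¹) ν :=
    (aestronglyMeasurable_const.sub (hq.const_mul z₀)).inv₀
  have hden_le : ∀ x, ‖(1 - z₀ * q x)⁻¹‖ ≤ δ⁻¹ := fun x => by
    rw [norm_inv]; exact inv_anti₀ hδ (h x)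
  have hq' : AEStronglyMeasurable (fun x => q x / (1 - z₀ * q x)) ν := by
    simpa only [div_eq_mul_inv] using hq.fun_mul hden
  have hf' : Integrable (fun x => f x / (1 - z₀ * q x)) ν := by
    simpa only [div_eq_mul_inv] using hf.mul_bdd hden (Eventually.of_forall hden_le)
  have hq_le : ∀ x, ‖q x / (1 - z₀ * q x)‖ ≤ M / δ := fun x => by
    rw [norm_div]
    exact div_le_div₀ ((norm_nonneg _).trans (hM x)) (hM x) hδ (h x)
  have hsplit : ∀ (y : ℂ) (x : X), f x / (1 - z₀ * q x) / (1 - y * (q x / (1 - z₀ * q x))) =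
      f x / (1 - (z₀ + y) * q x) := fun y x => by
    have hne : 1 - z₀ * q x ≠ 0 := norm_pos_iff.1 (hδ.trans_le (h x))
    rw [div_div, mul_sub, mul_one, mul_left_comm, mul_div_cancel₀ _ hne]
    ring_nf
  have hsmall : ∀ᶠ y : ℂ in 𝓝 0, ‖y‖ * (M / δ) < 1 :=
    (by fun_prop : Continuous fun y : ℂ => ‖y‖ * (M / δ)).continuousAt.eventually_lt
      continuousAt_const (by simp)
  refine HasFPowerSeriesAt.analyticAt (p := .ofScalars ℂ fun k : ℕ =>
    ∫ x, f x / (1 - z₀ * q x) * (q x / (1 - z₀ * q x)) ^ k ∂ν) (hasFPowerSeriesAt_iff.2 ?_)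
  filter_upwards [hsmall] with y hy
  simpa only [hsplit, FormalMultilinearSeries.coeff_ofScalars, smul_eq_mul] using
    hasSum_integral_div_one_sub_mul hf' hq' hq_le hy

theorem norm_integral_div_one_sub_mul_le (hq0 : ∀ x, q x ≠ 0) (hq1 : ∀ x, ‖q x‖ ≤ 1)
    (hfq : Integrable (fun x => ‖f x‖ / ‖q x‖) ν) {δ : ℝ} (hδ : 0 < δ) {z : ℂ}
    (h : ∀ x, δ * (1 + ‖z * q x‖) ≤ ‖1 - z * q x‖) :
    ‖∫ x, f x / (1 - z * q x) ∂ν‖ ≤ (∫ x, ‖f x‖ / ‖q x‖ ∂ν) / δ * (1 + ‖z‖)⁻¹ := by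
  have hpoint : ∀ x, ‖f x / (1 - z * q x)‖ ≤ (δ * (1 + ‖z‖))⁻¹ * (‖f x‖ / ‖q x‖) := fun x => by
    have hq0' : 0 < ‖q x‖ := norm_pos_iff.2 (hq0 x)
    have hden : δ * (1 + ‖z‖) * ‖q x‖ ≤ ‖1 - z * q x‖ := by
      refine le_trans ?_ (h x)
      rw [mul_assoc, norm_mul, add_mul, one_mul]
      gcongr
      exact hq1 x
    calc ‖f x / (1 - z * q x)‖ ≤ ‖f x‖ / (δ * (1 + ‖z‖) * ‖q x‖) := by
          rw [norm_div]; gcongr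
      _ = (δ * (1 + ‖z‖))⁻¹ * (‖f x‖ / ‖q x‖) := by field_simp
  refine (norm_integral_le_of_norm_le (hfq.const_mul _) (Eventually.of_forall hpoint)).trans_eq ?_
  rw [integral_const_mul, mul_inv]
  ring

end GeometricKernel

/-! ### The Bromwich integral for `1 / Γ` -/

theorem rpow_mul_exp_neg_le_Gamma {s c : ℝ} (hs : 1 ≤ s) (hc : 0 ≤ c) :
    c ^ (s - 1) * Real.exp (-c) ≤ Real.Gamma s := by
  have hint : IntegrableOn (fun x => Real.exp (-x) * x ^ (s - 1)) (Ioi 0) :=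
    Real.GammaIntegral_convergent (by linarith)
  have hsub : Ioi c ⊆ Ioi 0 := Ioi_subset_Ioi hc
  calc c ^ (s - 1) * Real.exp (-c) = ∫ x in Ioi c, Real.exp (-x) * c ^ (s - 1) := by
        rw [integral_mul_const, integral_exp_neg_Ioi, mul_comm]
    _ ≤ ∫ x in Ioi c, Real.exp (-x) * x ^ (s - 1) := by
        refine setIntegral_mono_on ((integrableOn_exp_neg_Ioi c).mul_const _)
          (hint.mono_set hsub) measurableSet_Ioi fun x hx => ?_
        have hcx : c ≤ x := le_of_lt hx
        gcongr
    _ ≤ ∫ x in Ioi 0, Real.exp (-x) * x ^ (s - 1) := by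
        refine setIntegral_mono_set hint ?_ hsub.eventuallyLE
        filter_upwards [ae_restrict_mem measurableSet_Ioi] with x hx
        have hx0 : 0 < x := hx
        positivity
    _ = Real.Gamma s := (Real.Gamma_eq_integral (by linarith)).symm

theorem eqOn_re_pos_of_eq_ofReal {F : Type*} [NormedAddCommGroup F] [NormedSpace ℂ F]
    {f g : ℂ → F} (hf : AnalyticOnNhd ℂ f {z | 0 < z.re})
    (hg : AnalyticOnNhd ℂ g {z | 0 < z.re}) (h : ∀ x : ℝ, 0 < x → f x = g x) :
    EqOn f g {z | 0 < z.re} := by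
  refine hf.eqOn_of_preconnected_of_frequently_eq hg (convex_halfSpace_re_gt 0).isPreconnected
    (z₀ := 1) (by simp) ?_
  have hreal : Tendsto (fun x : ℝ => (x : ℂ)) (𝓝[≠] 1) (𝓝[≠] 1) :=
    tendsto_nhdsWithin_of_tendsto_nhds_of_eventually_within _
      ((continuous_ofReal.tendsto' 1 1 ofReal_one).mono_left nhdsWithin_le_nhds)
      (by filter_upwards [self_mem_nhdsWithin] with x hx using by simpa using hx)
  refine hreal.frequently (Eventually.frequently ?_)
  filter_upwards [nhdsWithin_le_nhds (lt_mem_nhds one_pos)] with x hx using h x hx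

theorem integrableOn_cpow_mul_exp_neg_mul_Ioi {a r : ℂ} (ha : 0 < a.re) (hr : 0 < r.re) :
    IntegrableOn (fun t : ℝ => (t : ℂ) ^ (a - 1) * exp (-(r * t))) (Ioi 0) := by
  refine (integrableOn_rpow_mul_exp_neg_mul_rpow (s := a.re - 1) (p := 1)
    (by linarith) one_pos hr).mono' ?_ ?_
  · refine ContinuousOn.aestronglyMeasurable (fun t ht => ?_) measurableSet_Ioi
    exact ((continuousAt_ofReal_cpow_const t _ (.inr (ne_of_gt ht))).mul
      (by fun_prop)).continuousWithinAt
  · filter_upwards [ae_restrict_mem measurableSet_Ioi] with t ht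
    simp [norm_exp, norm_cpow_eq_rpow_re_of_pos ht]

theorem analyticOnNhd_integral_cpow_mul_exp_neg_mul {s : ℝ} (hs : 0 < s) :
    AnalyticOnNhd ℂ
      (fun r => ∫ t in Ioi (0 : ℝ), (t : ℂ) ^ ((s : ℂ) - 1) * exp (-(r * t))) {r | 0 < r.re} := by
  set ν : Measure ℝ := (volume.restrict (Ioi 0)).withDensity fun t => (t ^ (s - 1)).toNNReal with hν
  have hmeas : Measurable fun t : ℝ => (t ^ (s - 1)).toNNReal := by fun_prop
  have hden : ∀ t ∈ Ioi (0 : ℝ), (((t ^ (s - 1)).toNNReal : ℝ) : ℂ) = (t : ℂ) ^ ((s : ℂ) - 1) := by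
    intro t ht
    have ht0 : 0 ≤ t := le_of_lt ht
    rw [Real.coe_toNNReal _ (by positivity), ofReal_cpow ht0]
    push_cast
    rfl
  have hmgf : ∀ r : ℂ, ∫ t in Ioi (0 : ℝ), (t : ℂ) ^ ((s : ℂ) - 1) * exp (-(r * t)) =
      ProbabilityTheory.complexMGF id ν (-r) := by
    intro r
    rw [ProbabilityTheory.complexMGF, hν, integral_withDensity_eq_integral_smul hmeas]
    refine setIntegral_congr_fun measurableSet_Ioi fun t ht => ?_
    simp only [← hden t ht, id_eq, neg_mul, NNReal.smul_def, real_smul]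
  have hexp : Iio 0 ⊆ ProbabilityTheory.integrableExpSet id ν := by
    intro x hx
    rw [ProbabilityTheory.integrableExpSet, mem_ofPred_eq, hν,
      integrable_withDensity_iff_integrable_smul hmeas]
    refine (integrableOn_rpow_mul_exp_neg_mul_rpow (s := s - 1) (b := -x) (by linarith) one_pos
      (neg_pos.2 hx)).congr ?_
    filter_upwards [ae_restrict_mem measurableSet_Ioi] with t ht
    have ht0 : 0 ≤ t := le_of_lt ht
    simp [NNReal.smul_def, Real.rpow_nonneg ht0]
  simp only [hmgf]
  refine ProbabilityTheory.analyticOnNhd_complexMGF.comp analyticOnNhd_id.neg fun r hr => ?_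
  exact interior_mono hexp (by simpa using hr)

theorem integral_cpow_mul_exp_neg_mul_Ioi_of_re_pos {s : ℝ} (hs : 0 < s) {r : ℂ} (hr : 0 < r.re) :
    ∫ t in Ioi (0 : ℝ), (t : ℂ) ^ ((s : ℂ) - 1) * exp (-(r * t)) = r ^ (-(s : ℂ)) * Gamma s := by
  refine eqOn_re_pos_of_eq_ofReal (g := fun r => r ^ (-(s : ℂ)) * Gamma s)
    (analyticOnNhd_integral_cpow_mul_exp_neg_mul hs) (fun r hr => ?_) (fun x hx => ?_) hr
  · exact (analyticAt_id.cpow analyticAt_const (.inl hr)).mul analyticAt_const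
  · rw [integral_cpow_mul_exp_neg_mul_Ioi (by simpa using hs) hx, one_div, inv_cpow, cpow_neg]
    rw [arg_ofReal_of_nonneg hx.le]
    exact Real.pi_pos.ne

/-- The vertical line `Re t = c`, parametrised as `t = c + 2πiw` so that the Bromwich measure
`dt / (2πi)` becomes `dw` and the inverse Laplace transform an inverse Fourier transform. -/
noncomputable def bromwichLine (c w : ℝ) : ℂ := c + (2 * π * w : ℝ) * I

@[simp] theorem bromwichLine_re (c w : ℝ) : (bromwichLine c w).re = c := by simp [bromwichLine]

@[simp] theorem bromwichLine_im (c w : ℝ) : (bromwichLine c w).im = 2 * π * w := by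
  simp [bromwichLine]

theorem le_norm_bromwichLine (c w : ℝ) : c ≤ ‖bromwichLine c w‖ := by
  simpa using re_le_norm (bromwichLine c w)

theorem norm_exp_mul_bromwichLine_cpow (c s w : ℝ) :
    ‖exp (bromwichLine c w) * bromwichLine c w ^ (-(s : ℂ))‖ =
      Real.exp c * ‖bromwichLine c w‖ ^ (-s) := by
  rw [norm_mul, norm_exp, bromwichLine_re, ← ofReal_neg, norm_cpow_real]

section BromwichLine

variable {c : ℝ} (hc : 0 < c)
include hc

theorem bromwichLine_mem_slitPlane (w : ℝ) : bromwichLine c w ∈ slitPlane :=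
  .inl (by rwa [bromwichLine_re])

theorem bromwichLine_ne_zero (w : ℝ) : bromwichLine c w ≠ 0 :=
  slitPlane_ne_zero (bromwichLine_mem_slitPlane hc w)

theorem continuous_bromwichLine_cpow (a : ℂ) : Continuous fun w => bromwichLine c w ^ a :=
  (by unfold bromwichLine; fun_prop : Continuous (bromwichLine c)).cpow continuous_const
    (bromwichLine_mem_slitPlane hc)

theorem integrable_norm_bromwichLine_rpow {s : ℝ} (hs : 1 < s) :
    Integrable fun w => ‖bromwichLine c w‖ ^ (-s) := by
  have hbracket := ((integrable_rpow_neg_one_add_norm_sq (E := ℝ) (μ := volume) (r := s)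
    (by simpa using hs)).comp_mul_left' (R := 2 * π / c) (by positivity)).const_mul (c ^ (-s))
  refine hbracket.congr (Eventually.of_forall fun w => ?_)
  have hsq : ‖bromwichLine c w‖ ^ 2 = c ^ 2 * (1 + ‖2 * π / c * w‖ ^ 2) := by
    rw [← normSq_eq_norm_sq, normSq_apply, bromwichLine_re, bromwichLine_im, Real.norm_eq_abs,
      sq_abs]
    field_simp
  have hnorm : ‖bromwichLine c w‖ = c * (1 + ‖2 * π / c * w‖ ^ 2) ^ (1 / 2 : ℝ) := by
    rw [← Real.sqrt_eq_rpow, ← Real.sqrt_sq (norm_nonneg (bromwichLine c w)), hsq,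
      Real.sqrt_mul (sq_nonneg c), Real.sqrt_sq hc.le]
  beta_reduce
  rw [hnorm, Real.mul_rpow hc.le (by positivity), ← Real.rpow_mul (by positivity)]
  ring_nf

theorem integrable_bromwichLine_cpow {s : ℝ} (hs : 1 < s) :
    Integrable fun w => bromwichLine c w ^ (-(s : ℂ)) := by
  refine (integrable_norm_bromwichLine_rpow hc hs).mono'
    (continuous_bromwichLine_cpow hc _).aestronglyMeasurable (Eventually.of_forall fun w => ?_)
  rw [← ofReal_neg, norm_cpow_real]

theorem integrable_exp_mul_bromwichLine_cpow {s : ℝ} (hs : 1 < s) :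
    Integrable fun w => exp (bromwichLine c w) * bromwichLine c w ^ (-(s : ℂ)) := by
  refine ((integrable_norm_bromwichLine_rpow hc hs).const_mul (Real.exp c)).mono'
    ?_ (Eventually.of_forall fun w => (norm_exp_mul_bromwichLine_cpow c s w).le)
  have hcont : Continuous fun w => exp (bromwichLine c w) := by unfold bromwichLine; fun_prop
  exact (hcont.mul (continuous_bromwichLine_cpow hc _)).aestronglyMeasurable

theorem fourier_indicator_cpow_mul_exp_neg_mul {s : ℝ} (hs : 0 < s) :
    𝓕 ((Ioi (0 : ℝ)).indicator fun t : ℝ => (t : ℂ) ^ ((s : ℂ) - 1) * exp (-(c * t))) =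
      fun w => bromwichLine c w ^ (-(s : ℂ)) * Gamma s := by
  ext w
  rw [Real.fourier_real_eq_integral_exp_smul,
    ← integral_cpow_mul_exp_neg_mul_Ioi_of_re_pos hs (by rwa [bromwichLine_re]),
    ← integral_indicator measurableSet_Ioi]
  congr 1 with t
  by_cases ht : t ∈ Ioi (0 : ℝ)
  · simp only [indicator_of_mem ht, smul_eq_mul]
    rw [mul_left_comm, ← exp_add, bromwichLine]
    push_cast
    ring_nf
  · simp [indicator_of_notMem ht]

theorem inv_Gamma_eq_integral_bromwichLine {s : ℝ} (hs : 1 < s) :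
    (Gamma s)⁻¹ = ∫ w, exp (bromwichLine c w) * bromwichLine c w ^ (-(s : ℂ)) := by
  set g : ℝ → ℂ := fun t => (t : ℂ) ^ ((s : ℂ) - 1) * exp (-(c * t)) with hg
  have hs0 : 0 < s := one_pos.trans hs
  have hG : Gamma s ≠ 0 := Gamma_ne_zero_of_re_pos (by simpa using hs0)
  have hfourier := fourier_indicator_cpow_mul_exp_neg_mul hc hs0
  have hint : Integrable ((Ioi 0).indicator g) :=
    (integrable_indicator_iff measurableSet_Ioi).2 <|
      integrableOn_cpow_mul_exp_neg_mul_Ioi (by simpa using hs0) (by simpa using hc)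
  have hcont : ContinuousAt ((Ioi 0).indicator g) 1 := by
    have hev : (Ioi 0).indicator g =ᶠ[𝓝 1] g := by
      filter_upwards [lt_mem_nhds one_pos] with x hx using indicator_of_mem hx g
    exact (continuousAt_congr hev).2 <|
      (continuousAt_ofReal_cpow_const _ _ (.inr one_ne_zero)).mul (by fun_prop)
  have hinv := hint.fourierInv_fourier_eq
    (by rw [hfourier]; exact (integrable_bromwichLine_cpow hc hs).mul_const _) hcont
  rw [hfourier, Real.fourierInv_eq', indicator_of_mem (mem_Ioi.2 one_pos)] at hinv
  have hexp : ∀ w : ℝ, exp (bromwichLine c w) * bromwichLine c w ^ (-(s : ℂ)) =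
      exp c * (Gamma s)⁻¹ * (exp (↑(2 * π * inner ℝ w 1) * I) •
        (bromwichLine c w ^ (-(s : ℂ)) * Gamma s)) := fun w => by
    have hsplit : exp (bromwichLine c w) = exp c * exp (↑(2 * π * inner ℝ w 1) * I) := by
      simp [← exp_add, bromwichLine]
    rw [hsplit, smul_eq_mul]
    field_simp
  simp only [hexp]
  rw [integral_const_mul, hinv, mul_right_comm, hg]
  simp [← exp_add]

end BromwichLine

/-! ### The Mittag-Leffler function -/

section PowerSeries

variable {α : ℝ}

theorem summable_pow_mul_norm_inv_Gamma (hα : 0 < α) (β : ℝ) {R : ℝ} (hR : 0 < R) :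
    Summable fun k : ℕ => R ^ k * ‖(Gamma ((α * k + β : ℝ) : ℂ))⁻¹‖ := by
  set c : ℝ := (2 * R) ^ (1 / α) with hc_def
  have hc : 0 < c := by positivity
  have hcα : c ^ α = 2 * R := by
    rw [hc_def, ← Real.rpow_mul (by positivity), one_div_mul_cancel hα.ne', Real.rpow_one]
  have hlarge : ∀ᶠ k : ℕ in atTop, 1 ≤ α * k + β :=
    (tendsto_atTop_add_const_right _ β
      (tendsto_natCast_atTop_atTop.const_mul_atTop hα)).eventually_ge_atTop 1
  refine Summable.of_norm_bounded_eventually_nat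
    (summable_geometric_two.mul_left (Real.exp c * c ^ (1 - β))) ?_
  filter_upwards [hlarge] with k hk
  have hGamma := rpow_mul_exp_neg_le_Gamma hk hc.le
  have hpos : 0 < Real.Gamma (α * k + β) := Real.Gamma_pos_of_pos (by linarith)
  rw [Gamma_ofReal, norm_inv, norm_real, Real.norm_of_nonneg hpos.le,
    Real.norm_of_nonneg (by positivity)]
  calc R ^ k * (Real.Gamma (α * k + β))⁻¹
      ≤ R ^ k * (c ^ (α * k + β - 1) * Real.exp (-c))⁻¹ := by gcongr
    _ = R ^ k * (c ^ (α * k) / c ^ (1 - β) * Real.exp (-c))⁻¹ := by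
        rw [← Real.rpow_sub hc]; ring_nf
    _ = Real.exp c * c ^ (1 - β) * (1 / 2) ^ k := by
        rw [Real.rpow_mul hc.le, hcα, Real.rpow_natCast, Real.exp_neg, mul_pow, one_div, inv_pow]
        field_simp

theorem norm_pow_div_Gamma_le (α β : ℝ) {R : ℝ} (k : ℕ) {z : ℂ} (hz : ‖z‖ ≤ R) :
    ‖z ^ k / Gamma ((α * k + β : ℝ) : ℂ)‖ ≤ R ^ k * ‖(Gamma ((α * k + β : ℝ) : ℂ))⁻¹‖ := by
  rw [div_eq_mul_inv, norm_mul, norm_pow]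
  gcongr

theorem hasSum_mittagLeffler (hα : 0 < α) (β : ℝ) (z : ℂ) :
    HasSum (fun k : ℕ => z ^ k / Gamma ((α * k + β : ℝ) : ℂ)) (mittagLeffler α β z) :=
  (Summable.of_norm_bounded
    (summable_pow_mul_norm_inv_Gamma hα β (by positivity : 0 < ‖z‖ + 1))
    fun k => norm_pow_div_Gamma_le α β k (by linarith)).hasSum

theorem differentiable_mittagLeffler (hα : 0 < α) (β : ℝ) :
    Differentiable ℂ (mittagLeffler α β) := by
  intro z
  have hball : DifferentiableOn ℂ (mittagLeffler α β) (Metric.ball 0 (‖z‖ + 1)) :=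
    differentiableOn_tsum_of_summable_norm
      (summable_pow_mul_norm_inv_Gamma hα β (by positivity : 0 < ‖z‖ + 1))
      (fun k => by fun_prop) Metric.isOpen_ball
      fun k w hw => norm_pow_div_Gamma_le α β k (mem_ball_zero_iff.1 hw).le
  exact hball.differentiableAt (Metric.isOpen_ball.mem_nhds (by simp))

theorem hasSum_deriv_mittagLeffler (hα : 0 < α) (β : ℝ) (z : ℂ) :
    HasSum (fun k : ℕ => k * z ^ (k - 1) / Gamma ((α * k + β : ℝ) : ℂ))
      (deriv (mittagLeffler α β) z) := by
  have h := hasSum_deriv_of_summable_norm (z := z)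
    (F := fun (k : ℕ) (w : ℂ) => w ^ k / Gamma ((α * k + β : ℝ) : ℂ))
    (summable_pow_mul_norm_inv_Gamma hα β (by positivity : 0 < ‖z‖ + 1))
    (fun k => by fun_prop) Metric.isOpen_ball
    (fun k w hw => norm_pow_div_Gamma_le α β k (mem_ball_zero_iff.1 hw).le) (by simp)
  simp only [deriv_div_const, deriv_pow_field] at h
  exact h

theorem mittagLeffler_eq_add_mul_deriv (hα : 0 < α) (β : ℝ) (z : ℂ) :
    mittagLeffler α β z =
      β * mittagLeffler α (β + 1) z + α * (z * deriv (mittagLeffler α (β + 1)) z) := by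
  have hsum := ((hasSum_mittagLeffler hα (β + 1) z).mul_left (β : ℂ)).add
    (((hasSum_deriv_mittagLeffler hα (β + 1) z).mul_left z).mul_left (α : ℂ))
  refine (hasSum_mittagLeffler hα β z).unique (hsum.congr_fun fun k => ?_)
  have hshift : ((α * k + β : ℝ) : ℂ) + 1 = ((α * k + (β + 1) : ℝ) : ℂ) := by push_cast; ring
  have hpow : (k : ℂ) * z ^ k = z * (k * z ^ (k - 1)) := by
    rcases k with _ | k
    · simp
    · simp only [Nat.add_sub_cancel]; ring
  rw [div_eq_mul_inv, one_div_Gamma_eq_self_mul_one_div_Gamma_add_one, hshift]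
  push_cast
  linear_combination (α * (Gamma (α * k + (β + 1)))⁻¹) * hpow

end PowerSeries

/-- The Bromwich integral `(2πi)⁻¹ ∫ e^t t^(α - β) / (t^α - z) dt` along `Re t = 1` representing
`E_{α,β}(z)`, with the fraction divided through by `t^α` so that it expands as a geometric series
in `z`. -/
noncomputable def mittagLefflerIntegral (α β : ℝ) (z : ℂ) : ℂ :=
  ∫ w, exp (bromwichLine 1 w) * bromwichLine 1 w ^ (-(β : ℂ)) /
    (1 - z * bromwichLine 1 w ^ (-(α : ℂ)))

section SectorialDecay

variable {α β μ : ℝ}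

theorem sin_half_sub_mul_le_norm_one_sub_mul_cpow (hα : 0 ≤ α) (hμ : α * π / 2 ≤ μ) {z : ℂ}
    (hz : z ∈ leftSector μ) {t : ℂ} (ht : 0 < t.re) :
    Real.sin ((μ - α * π / 2) / 2) * (1 + ‖z * t ^ (-(α : ℂ))‖) ≤ ‖1 - z * t ^ (-(α : ℂ))‖ := by
  have ht0 : t ≠ 0 := fun h => by simp [h] at ht
  have hu0 : t ^ (α : ℂ) ≠ 0 := by simp [cpow_eq_zero_iff, ht0]
  have hu : 0 < ‖t ^ (α : ℂ)‖ := norm_pos_iff.2 hu0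
  have harg : |arg (t ^ (α : ℂ))| ≤ α * π / 2 :=
    calc |arg (t ^ (α : ℂ))| ≤ |α| * |arg t| := abs_arg_cpow_ofReal_le t α
      _ ≤ α * (π / 2) := by
        rw [abs_of_nonneg hα]; gcongr; exact abs_arg_le_pi_div_two_iff.2 ht.le
      _ = α * π / 2 := by ring
  have hdist := sin_half_sub_mul_le_norm_sub hμ hz hu0 harg
  have hfactor : 1 - z * t ^ (-(α : ℂ)) = -((z - t ^ (α : ℂ)) / t ^ (α : ℂ)) := by
    rw [cpow_neg]; field_simp; ring
  rw [hfactor, norm_neg, norm_div, le_div_iff₀ hu, norm_mul, cpow_neg, norm_inv]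
  refine le_trans (le_of_eq ?_) hdist
  field_simp
  ring

theorem norm_bromwichLine_one_cpow_neg_le_one (hα : 0 ≤ α) (w : ℝ) :
    ‖bromwichLine 1 w ^ (-(α : ℂ))‖ ≤ 1 := by
  rw [← ofReal_neg, norm_cpow_real]
  exact Real.rpow_le_one_of_one_le_of_nonpos (le_norm_bromwichLine 1 w) (neg_nonpos.2 hα)

theorem mittagLeffler_eq_mittagLefflerIntegral_of_norm_lt_one (hα : 0 < α) (hβ : 1 < β) {z : ℂ}
    (hz : ‖z‖ < 1) :
    mittagLeffler α β z = mittagLefflerIntegral α β z := by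
  refine (hasSum_mittagLeffler hα β z).unique ?_
  refine (hasSum_integral_div_one_sub_mul (integrable_exp_mul_bromwichLine_cpow one_pos hβ)
    (continuous_bromwichLine_cpow one_pos _).aestronglyMeasurable
    (norm_bromwichLine_one_cpow_neg_le_one hα.le) (by rwa [mul_one])).congr_fun fun k => ?_
  have hs : 1 < α * k + β := lt_add_of_nonneg_of_lt (by positivity) hβ
  rw [div_eq_mul_inv, inv_Gamma_eq_integral_bromwichLine one_pos hs]
  congr 2 with w
  rw [mul_assoc, ← cpow_nat_mul, ← cpow_add _ _ (bromwichLine_ne_zero one_pos w)]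
  push_cast
  ring_nf

theorem analyticAt_mittagLefflerIntegral (hα : 0 ≤ α) (hβ : 1 < β) {z : ℂ}
    (hz : α * π / 2 < |arg z|) :
    AnalyticAt ℂ (mittagLefflerIntegral α β) z := by
  have hz' : z ∈ leftSector |arg z| := le_refl |arg z|
  have hsin := sin_half_sub_pos (by positivity) hz hz'
  refine analyticAt_integral_div_one_sub_mul (integrable_exp_mul_bromwichLine_cpow one_pos hβ)
    (continuous_bromwichLine_cpow one_pos _).aestronglyMeasurable
    (norm_bromwichLine_one_cpow_neg_le_one hα) hsin fun w => ?_
  refine le_trans ?_ (sin_half_sub_mul_le_norm_one_sub_mul_cpow hα hz.le hz' (by simp))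
  exact le_mul_of_one_le_right hsin.le (le_add_of_nonneg_right (norm_nonneg _))

theorem mittagLeffler_eq_mittagLefflerIntegral (hα : 0 < α) (hβ : 1 < β) {z : ℂ}
    (hz : α * π / 2 < |arg z|) : mittagLeffler α β z = mittagLefflerIntegral α β z := by
  set ray : Set ℂ := (Ioi 0).image fun r : ℝ => (r : ℂ) * z
  have hray : IsPreconnected ray := isPreconnected_Ioi.image _ (by fun_prop)
  have hsmall : ∃ r : ℝ, 0 < r ∧ ‖(r : ℂ) * z‖ < 1 := by
    refine ⟨(‖z‖ + 1)⁻¹, by positivity, ?_⟩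
    rw [norm_mul, norm_real, Real.norm_of_nonneg (by positivity), inv_mul_lt_one₀ (by positivity)]
    exact lt_add_one _
  obtain ⟨r, hr, hrz⟩ := hsmall
  refine AnalyticOnNhd.eqOn_of_preconnected_of_eventuallyEq (U := ray)
    (fun x _ => (differentiable_mittagLeffler hα β).analyticAt x) ?_ hray
    (mem_image_of_mem _ hr) ?_ ⟨1, mem_Ioi.2 one_pos, by simp⟩
  · rintro _ ⟨r, hr, rfl⟩
    exact analyticAt_mittagLefflerIntegral hα.le hβ (by rwa [arg_real_mul z hr])
  · filter_upwards [(isOpen_lt continuous_norm continuous_const).mem_nhds hrz] with x hx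
    exact mittagLeffler_eq_mittagLefflerIntegral_of_norm_lt_one hα hβ hx

theorem mittagLeffler_isBigO_of_one_add_lt (hα : 0 < α) (hβ : 1 + α < β) (hμ : α * π / 2 < μ) :
    mittagLeffler α β =O[𝓟 (leftSector μ)] fun z => (1 + ‖z‖)⁻¹ := by
  have hquot : ∀ w, ‖exp (bromwichLine 1 w) * bromwichLine 1 w ^ (-(β : ℂ))‖ /
      ‖bromwichLine 1 w ^ (-(α : ℂ))‖ = Real.exp 1 * ‖bromwichLine 1 w‖ ^ (-(β - α)) := fun w => by
    rw [norm_exp_mul_bromwichLine_cpow, ← ofReal_neg, norm_cpow_real,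
      mul_div_assoc, ← Real.rpow_sub (one_pos.trans_le (le_norm_bromwichLine 1 w))]
    ring_nf
  have hint : Integrable fun w => ‖exp (bromwichLine 1 w) * bromwichLine 1 w ^ (-(β : ℂ))‖ /
      ‖bromwichLine 1 w ^ (-(α : ℂ))‖ := by
    simp only [hquot]
    exact (integrable_norm_bromwichLine_rpow one_pos (by linarith)).const_mul _
  refine IsBigO.of_bound ((∫ w, Real.exp 1 * ‖bromwichLine 1 w‖ ^ (-(β - α))) /
    Real.sin ((μ - α * π / 2) / 2)) (eventually_principal.2 fun z hz => ?_)
  rw [mittagLeffler_eq_mittagLefflerIntegral hα (by linarith) (hμ.trans_le hz),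
    Real.norm_of_nonneg (by positivity)]
  simpa only [hquot, mittagLefflerIntegral] using norm_integral_div_one_sub_mul_le
    (fun w => by simp [cpow_eq_zero_iff, bromwichLine_ne_zero one_pos])
    (norm_bromwichLine_one_cpow_neg_le_one hα.le) hint (sin_half_sub_pos (by positivity) hμ hz)
    fun w => sin_half_sub_mul_le_norm_one_sub_mul_cpow hα.le hμ.le hz (by simp)

theorem mittagLeffler_isBigO_of_isBigO_add_one (hα : 0 < α) {b : ℝ} (hb : 0 ≤ b) (hbμ : b < μ)
    (h : mittagLeffler α (β + 1) =O[𝓟 (leftSector b)] fun z => (1 + ‖z‖)⁻¹) :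
    mittagLeffler α β =O[𝓟 (leftSector μ)] fun z => (1 + ‖z‖)⁻¹ := by
  have hderiv := isBigO_smul_deriv_leftSector hb hbμ
    (differentiable_mittagLeffler hα (β + 1)).differentiableOn h
  have hself := h.mono (principal_mono.2 (leftSector_anti hbμ.le))
  exact ((hself.const_mul_left (β : ℂ)).add (hderiv.const_mul_left (α : ℂ))).congr_left
    fun z => (mittagLeffler_eq_add_mul_deriv hα β z).symm

theorem mittagLeffler_isBigO (hα : 0 < α) (hμ : α * π / 2 < μ) :
    mittagLeffler α β =O[𝓟 (leftSector μ)] fun z => (1 + ‖z‖)⁻¹ := by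
  obtain ⟨n, hn⟩ := exists_nat_gt (1 + α - β)
  induction n generalizing β μ with
  | zero => exact mittagLeffler_isBigO_of_one_add_lt hα (by simpa using hn) hμ
  | succ n ih =>
    obtain ⟨b, hαb, hbμ⟩ := exists_between hμ
    have hb : 0 ≤ b := le_trans (by positivity) hαb.le
    push_cast at hn
    exact mittagLeffler_isBigO_of_isBigO_add_one hα hb hbμ (ih hαb (by linarith))

end SectorialDecay

theorem mittagLeffler_bound_general (α β μ : ℝ) (hα : 0 < α) (hμ : α * π / 2 < μ) :
    ∃ C : ℝ, 0 < C ∧ ∀ z : ℂ, μ ≤ |arg z| → ‖mittagLeffler α β z‖ ≤ C / (1 + ‖z‖) := by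
  obtain ⟨C, hC, hbound⟩ := (mittagLeffler_isBigO (β := β) hα hμ).exists_pos
  refine ⟨C, hC, fun z hz => ?_⟩
  have h := isBigOWith_principal.1 hbound z hz
  rwa [Real.norm_of_nonneg (by positivity), ← div_eq_mul_inv] at h

/-- For `0 < α < 1`, `β ∈ ℝ` and `απ/2 < μ < min{π, απ}`, there is a constant
`C = C(α, β, μ) > 0` with `|E_{α,β}(z)| ≤ C / (1 + |z|)` on the sector
`μ ≤ |arg z| ≤ π`. -/
theorem mittagLeffler_bound (α β μ : ℝ) (hα0 : 0 < α) (hα1 : α < 1)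
    (hμ1 : α * Real.pi / 2 < μ) (hμ2 : μ < min Real.pi (α * Real.pi)) :
    ∃ C : ℝ, 0 < C ∧ ∀ z : ℂ, z ≠ 0 →
      μ ≤ |Complex.arg z| → |Complex.arg z| ≤ Real.pi →
        ‖mittagLeffler α β z‖ ≤ C / (1 + ‖z‖) := by
  obtain ⟨C, hC, h⟩ := mittagLeffler_bound_general α β μ hα0 hμ1
  exact ⟨C, hC, fun z _ hz _ => h z hz⟩
end

section
/- Let 0 < α < 1 and T > 0. There exist constants C₁ > 0 and C₂ > 0 depending only on α such that the following holds: for every μ > 0, every u₀ ∈ ℝ, and every continuous function f : [0, T] → ℝ, the function u(t) = u₀ E_{α,1}(−μ t^α) + ∫₀^t (t − τ)^{α−1} E_{α,α}(−μ (t − τ)^α) f(τ) dτ satisfies |u(t)| ≤ C₁ |u₀| + (C₂/μ) sup_{0 ≤ τ ≤ T} |f(τ)| for all t ∈ (0, T]. -/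
/-- The real Mittag-Leffler function `E_{α,β}(x) = ∑ₖ xᵏ / Γ(αk + β)` (with the
convention that `1/Γ` vanishes at the poles of `Γ`, which holds for Mathlib's
`Real.Gamma` since it vanishes at nonpositive integers). -/
noncomputable def mittagLefflerReal (α β x : ℝ) : ℝ :=
  ∑' k : ℕ, x ^ k / Real.Gamma (α * k + β)

/-!
Write `g_a(t) = t ^ (a - 1) / Γ(a)`, so that `g_a * g_b = g_{a+b}` for the convolution on `(0, t)`.
The function `R(t) = μ t ^ (α - 1) E_{α,α}(-μ t ^ α)` is the alternating series
`∑ₖ (-1)ᵏ (μ g_α)^{*(k+1)}`, hence the resolvent of the Volterra kernel `κ = μ g_α`: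
`R + κ * R = κ`.

For `α ≤ 1` the kernel `κ` is nonincreasing and log-convex, which forces `R > 0`. Indeed, at a first
zero `t₀` of `R`, log-convexity lets one compare the equations at `t₀` and at `t < t₀`, and the
result is `R(t) κ(t₀) ≤ κ(t) ∫_t^{t₀} κ(t₀ - s) R(s) ds`. Taking for `t` a maximum point of `R` on a
short interval ending at `t₀` gives a contradiction, since `κ` is integrable at `0`.

As `κ` is nonincreasing, `κ(t) ∫_0^t R ≤ (κ * R)(t) ≤ κ(t)`, so `R` has mass at most `1`. This
bounds the forcing term by `sup |f| / μ`, and `E_{α,1}(-μ t ^ α) = 1 - ∫_0^t R` lies in `[0, 1]`.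
-/

open MeasureTheory Set Filter Topology

/-- A Volterra convolution kernel on `(0, ∞)` which is positive, nonincreasing, logarithmically
convex and integrable at `0`. Log-convexity is encoded multiplicatively: the pairs `t, t₀ - s` and
`t₀, t - s` have the same sum, and the second one is more spread out. -/
structure IsLogConvexKernel (κ : ℝ → ℝ) : Prop where
  pos : ∀ ⦃t⦄, 0 < t → 0 < κ t
  antitoneOn : AntitoneOn κ (Ioi 0)
  logConvex : ∀ ⦃s t t₀⦄, 0 < s → s < t → t < t₀ → κ t * κ (t₀ - s) ≤ κ t₀ * κ (t - s)
  intervalIntegrable : ∀ ⦃t⦄, 0 < t → IntervalIntegrable κ volume 0 t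

/-- `R` is a resolvent of the Volterra kernel `κ`: it solves `R + κ * R = κ` on `(0, ∞)`, where `*`
is the convolution on `(0, t)`. Positivity near `0`, where `κ` dominates `κ * R`, is part of the
definition. -/
structure IsResolvent (κ R : ℝ → ℝ) : Prop where
  continuousOn : ContinuousOn R (Ioi 0)
  eventually_pos : ∀ᶠ t in 𝓝[>] 0, 0 < R t
  intervalIntegrable : ∀ ⦃t⦄, 0 < t → IntervalIntegrable (fun s => κ (t - s) * R s) volume 0 t
  add_integral : ∀ ⦃t⦄, 0 < t → R t + ∫ s in (0 : ℝ)..t, κ (t - s) * R s = κ t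

lemma exists_first_nonpos {f : ℝ → ℝ} {a t : ℝ} (hf : ContinuousOn f (Ioi a))
    (hpos : ∀ᶠ s in 𝓝[>] a, 0 < f s) (ht : a < t) (hft : f t ≤ 0) :
    ∃ t₀ > a, f t₀ ≤ 0 ∧ ∀ s ∈ Ioo a t₀, 0 < f s := by
  obtain ⟨b, hab, hb⟩ := mem_nhdsGT_iff_exists_Ioo_subset.1 hpos
  have hbt : b ≤ t := by
    by_contra! htb
    exact hft.not_gt (hb ⟨ht, htb⟩)
  have hcont : ContinuousOn f (Icc b t) := hf.mono fun s hs => lt_of_lt_of_le hab hs.1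
  have hcompact : IsCompact (Icc b t ∩ f ⁻¹' Iic 0) := isCompact_Icc.of_isClosed_subset
    (hcont.preimage_isClosed_of_isClosed isClosed_Icc isClosed_Iic) inter_subset_left
  obtain ⟨t₀, ⟨ht₀, hft₀⟩, hmin⟩ := hcompact.exists_isLeast ⟨t, ⟨hbt, le_rfl⟩, hft⟩
  refine ⟨t₀, lt_of_lt_of_le hab ht₀.1, hft₀, fun s hs => ?_⟩
  by_contra! hfs
  have hbs : b ≤ s := by
    by_contra! hsb
    exact hfs.not_gt (hb ⟨hs.1, hsb⟩)
  exact (hmin ⟨⟨hbs, hs.2.le.trans ht₀.2⟩, hfs⟩).not_gt hs.2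

namespace IsLogConvexKernel

variable {κ R : ℝ → ℝ} {t t₀ : ℝ}

lemma integral_mono (hκ : IsLogConvexKernel κ) {a b : ℝ} (ha : 0 < a) (hab : a ≤ b) :
    ∫ s in (0 : ℝ)..a, κ s ≤ ∫ s in (0 : ℝ)..b, κ s := by
  refine intervalIntegral.integral_mono_interval le_rfl ha.le hab ?_
    (hκ.intervalIntegrable (ha.trans_le hab))
  filter_upwards [ae_restrict_mem measurableSet_Ioc] with s hs using (hκ.pos hs.1).le

lemma exists_mul_integral_lt (hκ : IsLogConvexKernel κ) (c : ℝ) {ε b : ℝ} (hε : 0 < ε)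
    (hb : 0 < b) : ∃ h ∈ Ioo 0 b, c * ∫ s in (0 : ℝ)..h, κ s < ε := by
  have hcont : ContinuousOn (fun h => c * ∫ s in (0 : ℝ)..h, κ s) (Icc 0 b) := by
    rw [← uIcc_of_le hb.le]
    exact continuousOn_const.mul (intervalIntegral.continuousOn_primitive_interval'
      (hκ.intervalIntegrable hb) left_mem_uIcc)
  have hsmall := ((hcont 0 ⟨le_rfl, hb.le⟩).mono Ioo_subset_Icc_self).eventually_lt_const
    (u := ε) (by simpa using hε)
  rw [nhdsWithin_Ioo_eq_nhdsGT hb] at hsmall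
  obtain ⟨h, hh, hmem⟩ := (hsmall.and (Ioo_mem_nhdsGT hb)).exists
  exact ⟨h, hmem, hh⟩

lemma mul_integral_le (hκ : IsLogConvexKernel κ) (hR : IsResolvent κ R) (ht : 0 < t)
    (htt₀ : t < t₀) (hpos : ∀ s ∈ Ioo 0 t, 0 < R s) :
    κ t * ∫ s in (0 : ℝ)..t, κ (t₀ - s) * R s ≤
      κ t₀ * ∫ s in (0 : ℝ)..t, κ (t - s) * R s := by
  simp_rw [← intervalIntegral.integral_const_mul]
  refine intervalIntegral.integral_mono_on_of_le_Ioo ht.le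
    (((hR.intervalIntegrable (ht.trans htt₀)).mono_set ?_).const_mul _)
    ((hR.intervalIntegrable ht).const_mul _) fun s hs => ?_
  · rw [uIcc_of_le ht.le, uIcc_of_le (ht.trans htt₀).le]
    exact Icc_subset_Icc le_rfl htt₀.le
  · simp_rw [← mul_assoc]
    exact mul_le_mul_of_nonneg_right (hκ.logConvex hs.1 hs.2 htt₀) (hpos s hs).le

lemma mul_le_mul_integral_of_nonpos (hκ : IsLogConvexKernel κ) (hR : IsResolvent κ R) (ht : 0 < t)
    (htt₀ : t < t₀) (hpos : ∀ s ∈ Ioo 0 t, 0 < R s) (ht₀ : R t₀ ≤ 0) :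
    R t * κ t₀ ≤ κ t * ∫ s in t..t₀, κ (t₀ - s) * R s := by
  have hint := hR.intervalIntegrable (ht.trans htt₀)
  have hsplit := intervalIntegral.integral_add_adjacent_intervals
    (hint.mono_set (uIcc_subset_uIcc_left (mem_uIcc_of_le ht.le htt₀.le)))
    (hint.mono_set (uIcc_subset_uIcc_right (mem_uIcc_of_le ht.le htt₀.le)))
  have hle := hκ.mul_integral_le hR ht htt₀ hpos
  have htail : κ t * κ t₀ ≤ κ t * ((∫ s in (0 : ℝ)..t, κ (t₀ - s) * R s) +
      ∫ s in t..t₀, κ (t₀ - s) * R s) := by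
    refine mul_le_mul_of_nonneg_left ?_ (hκ.pos ht).le
    linarith [hR.add_integral (ht.trans htt₀)]
  rw [eq_sub_of_add_eq' (hR.add_integral ht)] at hle
  linarith

lemma integral_sub_mul_le (hκ : IsLogConvexKernel κ) (hR : IsResolvent κ R) (ht : 0 < t)
    (htt₀ : t < t₀) {M : ℝ} (hM : ∀ s ∈ Ioo t t₀, R s ≤ M) :
    ∫ s in t..t₀, κ (t₀ - s) * R s ≤ (∫ s in (0 : ℝ)..t₀ - t, κ s) * M := by
  have hint := hR.intervalIntegrable (ht.trans htt₀)
  have hκint := ((hκ.intervalIntegrable (sub_pos.2 htt₀)).comp_sub_left t₀).symm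
  rw [sub_zero, sub_sub_cancel] at hκint
  calc ∫ s in t..t₀, κ (t₀ - s) * R s
      ≤ ∫ s in t..t₀, κ (t₀ - s) * M := by
        refine intervalIntegral.integral_mono_on_of_le_Ioo htt₀.le
          (hint.mono_set (uIcc_subset_uIcc_right (mem_uIcc_of_le ht.le htt₀.le)))
          (hκint.mul_const M) fun s hs => ?_
        exact mul_le_mul_of_nonneg_left (hM s hs) (hκ.pos (sub_pos.2 hs.2)).le
    _ = (∫ s in (0 : ℝ)..t₀ - t, κ s) * M := by
        rw [intervalIntegral.integral_mul_const, intervalIntegral.integral_comp_sub_left κ,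
          sub_self]

theorem resolvent_pos (hκ : IsLogConvexKernel κ) (hR : IsResolvent κ R) (ht : 0 < t) :
    0 < R t := by
  by_contra! hRt
  obtain ⟨t₀, ht₀, hRt₀, hbefore⟩ :=
    exists_first_nonpos hR.continuousOn hR.eventually_pos ht hRt
  obtain ⟨h, hh, hsmall⟩ :=
    hκ.exists_mul_integral_lt (κ (t₀ / 2)) (hκ.pos ht₀) (half_pos ht₀)
  have hcont : ContinuousOn R (Icc (t₀ - h) t₀) :=
    hR.continuousOn.mono fun s hs => mem_Ioi.2 (by linarith [hs.1, hh.2])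
  obtain ⟨p, hp, hmax⟩ :=
    isCompact_Icc.exists_isMaxOn (nonempty_Icc.2 (sub_le_self t₀ hh.1.le)) hcont
  have hp_half : t₀ / 2 ≤ p := by linarith [hp.1, hh.2]
  have hRp : 0 < R p :=
    (hbefore (t₀ - h) ⟨by linarith [hh.2], sub_lt_self t₀ hh.1⟩).trans_le
      (hmax ⟨le_rfl, sub_le_self t₀ hh.1.le⟩)
  have hp0 : 0 < p := by linarith
  have hpt₀ : p < t₀ := hp.2.lt_of_ne fun heq => (heq ▸ hRp).not_ge hRt₀
  have hprim : ∫ s in (0 : ℝ)..t₀ - p, κ s ≤ ∫ s in (0 : ℝ)..h, κ s :=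
    hκ.integral_mono (sub_pos.2 hpt₀) (by linarith [hp.1])
  refine lt_irrefl (R p * κ t₀) ?_
  calc R p * κ t₀ ≤ κ p * ∫ s in p..t₀, κ (t₀ - s) * R s :=
        hκ.mul_le_mul_integral_of_nonpos hR hp0 hpt₀
          (fun s hs => hbefore s ⟨hs.1, hs.2.trans hpt₀⟩) hRt₀
    _ ≤ κ p * ((∫ s in (0 : ℝ)..t₀ - p, κ s) * R p) := by
        refine mul_le_mul_of_nonneg_left ?_ (hκ.pos hp0).le
        exact hκ.integral_sub_mul_le hR hp0 hpt₀ fun s hs => hmax ⟨hp.1.trans hs.1.le, hs.2.le⟩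
    _ ≤ κ (t₀ / 2) * ((∫ s in (0 : ℝ)..h, κ s) * R p) := by
        have hκp : κ p ≤ κ (t₀ / 2) := hκ.antitoneOn (half_pos ht₀) hp0 hp_half
        have hprim_pos : 0 < ∫ s in (0 : ℝ)..t₀ - p, κ s :=
          intervalIntegral.intervalIntegral_pos_of_pos_on
            (hκ.intervalIntegrable (sub_pos.2 hpt₀)) (fun s hs => hκ.pos hs.1) (sub_pos.2 hpt₀)
        have := (hκ.pos (half_pos ht₀)).le
        gcongr
    _ = R p * (κ (t₀ / 2) * ∫ s in (0 : ℝ)..h, κ s) := by ring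
    _ < R p * κ t₀ := by gcongr

theorem integral_resolvent_le_one (hκ : IsLogConvexKernel κ) (hR : IsResolvent κ R) (ht : 0 < t)
    (hint : IntervalIntegrable R volume 0 t) : ∫ s in (0 : ℝ)..t, R s ≤ 1 := by
  refine le_of_mul_le_mul_left ?_ (hκ.pos ht)
  calc κ t * ∫ s in (0 : ℝ)..t, R s = ∫ s in (0 : ℝ)..t, κ t * R s :=
        (intervalIntegral.integral_const_mul _ _).symm
    _ ≤ ∫ s in (0 : ℝ)..t, κ (t - s) * R s := by
        refine intervalIntegral.integral_mono_on_of_le_Ioo ht.le (hint.const_mul _)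
          (hR.intervalIntegrable ht) fun s hs => ?_
        refine mul_le_mul_of_nonneg_right ?_ (hκ.resolvent_pos hR hs.1).le
        exact hκ.antitoneOn (sub_pos.2 hs.2) ht (sub_le_self t hs.1.le)
    _ = κ t - R t := eq_sub_of_add_eq' (hR.add_integral ht)
    _ ≤ κ t * 1 := by linarith [hκ.resolvent_pos hR ht]

end IsLogConvexKernel

lemma integral_rpow_mul_sub_rpow {a b t : ℝ} (ha : 0 < a) (hb : 0 < b) (ht : 0 < t) :
    ∫ s in (0 : ℝ)..t, s ^ (a - 1) * (t - s) ^ (b - 1) =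
      t ^ (a + b - 1) * (Real.Gamma a * Real.Gamma b / Real.Gamma (a + b)) := by
  have hbeta := Complex.betaIntegral_scaled (a : ℂ) (b : ℂ) ht
  rw [Complex.betaIntegral_eq_Gamma_mul_div _ _ (by simpa using ha) (by simpa using hb),
    ← Complex.ofReal_add, Complex.Gamma_ofReal, Complex.Gamma_ofReal, Complex.Gamma_ofReal] at hbeta
  have hcast : ∫ s in (0 : ℝ)..t, (s : ℂ) ^ ((a : ℂ) - 1) * ((t : ℂ) - s) ^ ((b : ℂ) - 1) =
      ∫ s in (0 : ℝ)..t, ((s ^ (a - 1) * (t - s) ^ (b - 1) : ℝ) : ℂ) := by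
    refine intervalIntegral.integral_congr fun s hs => ?_
    rw [uIcc_of_le ht.le] at hs
    push_cast [Complex.ofReal_cpow hs.1, Complex.ofReal_cpow (sub_nonneg.2 hs.2)]
    rfl
  have hpow : (t : ℂ) ^ (((a + b : ℝ) : ℂ) - 1) = ((t ^ (a + b - 1) : ℝ) : ℂ) := by
    push_cast [Complex.ofReal_cpow ht.le]
    rfl
  rw [hcast, intervalIntegral.integral_ofReal, hpow] at hbeta
  exact_mod_cast hbeta

lemma rpow_mul_exp_neg_le_Gamma_s8 {x r : ℝ} (hx : 1 ≤ x) (hr : 0 ≤ r) :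
    r ^ (x - 1) * Real.exp (-r) ≤ Real.Gamma x := by
  have hint := Real.GammaIntegral_convergent (s := x) (by linarith)
  calc r ^ (x - 1) * Real.exp (-r) = ∫ y in Ioi r, r ^ (x - 1) * Real.exp (-y) := by
        rw [integral_const_mul, integral_exp_neg_Ioi]
    _ ≤ ∫ y in Ioi r, Real.exp (-y) * y ^ (x - 1) := by
        refine setIntegral_mono_on ((integrableOn_exp_neg_Ioi r).const_mul _)
          (hint.mono_set (Ioi_subset_Ioi hr)) measurableSet_Ioi fun y hy => ?_
        rw [mul_comm]
        exact mul_le_mul_of_nonneg_left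
          (Real.rpow_le_rpow hr (le_of_lt hy) (sub_nonneg.2 hx)) (Real.exp_pos _).le
    _ ≤ ∫ y in Ioi (0 : ℝ), Real.exp (-y) * y ^ (x - 1) := by
        refine setIntegral_mono_set hint ?_ (Ioi_subset_Ioi hr).eventuallyLE
        filter_upwards [ae_restrict_mem measurableSet_Ioi] with y hy
        exact mul_nonneg (Real.exp_pos _).le (Real.rpow_nonneg (le_of_lt hy) _)
    _ = Real.Gamma x := (Real.Gamma_eq_integral (by linarith)).symm

section MittagLeffler

variable {α β : ℝ}

lemma Gamma_mul_natCast_add_pos (hα : 0 ≤ α) (hβ : 0 < β) (k : ℕ) :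
    0 < Real.Gamma (α * k + β) :=
  Real.Gamma_pos_of_pos (by positivity)

lemma norm_pow_div_Gamma (hα : 0 ≤ α) (hβ : 0 < β) (x : ℝ) (k : ℕ) :
    ‖x ^ k / Real.Gamma (α * k + β)‖ = |x| ^ k / Real.Gamma (α * k + β) := by
  rw [norm_div, norm_pow, Real.norm_of_nonneg (Gamma_mul_natCast_add_pos hα hβ k).le,
    Real.norm_eq_abs]

/- With `r ^ α = 2|x| + 1`, the inequality `r ^ (αk + β - 1) ≤ exp r * Γ(αk + β)` compares the
series with a geometric series of ratio `1/2`. -/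
lemma summable_pow_div_Gamma (hα : 0 < α) (hβ : 0 < β) (x : ℝ) :
    Summable fun k : ℕ => x ^ k / Real.Gamma (α * k + β) := by
  set r : ℝ := (2 * |x| + 1) ^ α⁻¹
  have hr : 0 < r := by positivity
  have hrα : r ^ α = 2 * |x| + 1 := Real.rpow_inv_rpow (by positivity) hα.ne'
  refine Summable.of_norm_bounded_eventually_nat
    (summable_geometric_two.mul_left (Real.exp r * r ^ (1 - β))) ?_
  filter_upwards [tendsto_natCast_atTop_atTop.eventually_ge_atTop (1 / α)] with k hk
  have hone : 1 ≤ α * k + β := by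
    rw [div_le_iff₀' hα] at hk
    linarith
  rw [norm_pow_div_Gamma hα.le hβ, div_le_iff₀ (Gamma_mul_natCast_add_pos hα.le hβ k)]
  calc |x| ^ k ≤ ((1 / 2) * r ^ α) ^ k := by
        gcongr
        linarith
    _ = (Real.exp r * r ^ (1 - β) * (1 / 2) ^ k) * (r ^ (α * k + β - 1) * Real.exp (-r)) := by
        have hpow : (r ^ α) ^ k = r ^ (1 - β) * r ^ (α * k + β - 1) := by
          rw [← Real.rpow_mul_natCast hr.le, ← Real.rpow_add hr]
          ring_nf
        rw [mul_pow, hpow, Real.exp_neg]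
        field_simp
    _ ≤ (Real.exp r * r ^ (1 - β) * (1 / 2) ^ k) * Real.Gamma (α * k + β) := by
        gcongr
        exact rpow_mul_exp_neg_le_Gamma_s8 hone hr.le

lemma continuous_mittagLefflerReal (hα : 0 < α) (hβ : 0 < β) :
    Continuous (mittagLefflerReal α β) := by
  refine continuous_iff_continuousAt.2 fun x => ?_
  have hcont : ContinuousOn (mittagLefflerReal α β) (Icc (-(|x| + 1)) (|x| + 1)) := by
    refine continuousOn_tsum (fun k => by fun_prop)
      (summable_pow_div_Gamma hα hβ (|x| + 1)) fun k y hy => ?_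
    rw [norm_pow_div_Gamma hα.le hβ]
    have := (Gamma_mul_natCast_add_pos hα.le hβ k).le
    gcongr
    exact abs_le.2 hy
  exact hcont.continuousAt
    (Icc_mem_nhds (by linarith [neg_abs_le x]) (by linarith [le_abs_self x]))

lemma continuous_mittagLefflerReal_mul_rpow (hα : 0 < α) (hβ : 0 < β) (c : ℝ) :
    Continuous fun t => mittagLefflerReal α β (c * t ^ α) :=
  (continuous_mittagLefflerReal hα hβ).comp
    (continuous_const.mul (Real.continuous_rpow_const hα.le))

lemma mittagLefflerReal_zero (α β : ℝ) : mittagLefflerReal α β 0 = 1 / Real.Gamma β := by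
  rw [mittagLefflerReal, tsum_eq_single 0 fun k hk => by simp [hk]]
  simp

end MittagLeffler

/-- The kernel `g_a(t) = t ^ (a - 1) / Γ(a)`, convolution with which is the Riemann–Liouville
fractional integral of order `a`. -/
noncomputable def riemannLiouvilleKernel (a t : ℝ) : ℝ :=
  t ^ (a - 1) / Real.Gamma a

namespace riemannLiouvilleKernel

variable {a b t : ℝ}

@[simp]
lemma one_left (t : ℝ) : riemannLiouvilleKernel 1 t = 1 := by
  simp [riemannLiouvilleKernel]

lemma nonneg (ha : 0 < a) (ht : 0 ≤ t) : 0 ≤ riemannLiouvilleKernel a t :=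
  div_nonneg (Real.rpow_nonneg ht _) (Real.Gamma_pos_of_pos ha).le

lemma pos (ha : 0 < a) (ht : 0 < t) : 0 < riemannLiouvilleKernel a t :=
  div_pos (Real.rpow_pos_of_pos ht _) (Real.Gamma_pos_of_pos ha)

lemma integral_convolution (ha : 0 < a) (hb : 0 < b) (ht : 0 < t) :
    ∫ s in (0 : ℝ)..t, riemannLiouvilleKernel b (t - s) * riemannLiouvilleKernel a s =
      riemannLiouvilleKernel (a + b) t := by
  have hΓa := (Real.Gamma_pos_of_pos ha).ne'
  have hΓb := (Real.Gamma_pos_of_pos hb).ne'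
  calc ∫ s in (0 : ℝ)..t, riemannLiouvilleKernel b (t - s) * riemannLiouvilleKernel a s
      = ∫ s in (0 : ℝ)..t, (Real.Gamma a * Real.Gamma b)⁻¹ *
          (s ^ (a - 1) * (t - s) ^ (b - 1)) := by
        congr with s
        simp only [riemannLiouvilleKernel]
        field_simp
    _ = riemannLiouvilleKernel (a + b) t := by
        rw [intervalIntegral.integral_const_mul, integral_rpow_mul_sub_rpow ha hb ht,
          riemannLiouvilleKernel]
        field_simp

lemma intervalIntegrable_convolution (ha : 0 < a) (hb : 0 < b) (ht : 0 < t) :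
    IntervalIntegrable (fun s => riemannLiouvilleKernel b (t - s) * riemannLiouvilleKernel a s)
      volume 0 t :=
  intervalIntegral.intervalIntegrable_of_integral_ne_zero <| by
    rw [integral_convolution ha hb ht]
    exact (pos (add_pos ha hb) ht).ne'

lemma antitoneOn (ha : 0 < a) (ha1 : a ≤ 1) : AntitoneOn (riemannLiouvilleKernel a) (Ioi 0) :=
  fun _ hs _ _ hst => div_le_div_of_nonneg_right
    (Real.rpow_le_rpow_of_nonpos hs hst (sub_nonpos.2 ha1)) (Real.Gamma_pos_of_pos ha).le

lemma mul_le_mul_of_lt {s t₀ : ℝ} (ha1 : a ≤ 1) (hs : 0 < s) (hst : s < t)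
    (htt₀ : t < t₀) :
    riemannLiouvilleKernel a t * riemannLiouvilleKernel a (t₀ - s) ≤
      riemannLiouvilleKernel a t₀ * riemannLiouvilleKernel a (t - s) := by
  have ht : 0 < t := hs.trans hst
  have hts : 0 < t - s := sub_pos.2 hst
  have ht₀s : 0 < t₀ - s := sub_pos.2 (hst.trans htt₀)
  simp only [riemannLiouvilleKernel, div_mul_div_comm]
  refine div_le_div_of_nonneg_right ?_ (mul_self_nonneg _)
  rw [← Real.mul_rpow ht.le ht₀s.le, ← Real.mul_rpow (ht.trans htt₀).le hts.le]
  exact Real.rpow_le_rpow_of_nonpos (mul_pos (ht.trans htt₀) hts) (by nlinarith)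
    (sub_nonpos.2 ha1)

theorem isLogConvexKernel {c : ℝ} (hc : 0 < c) (ha : 0 < a) (ha1 : a ≤ 1) :
    IsLogConvexKernel fun t => c * riemannLiouvilleKernel a t where
  pos _ ht := mul_pos hc (pos ha ht)
  antitoneOn _ hs _ ht hst := mul_le_mul_of_nonneg_left (antitoneOn ha ha1 hs ht hst) hc.le
  logConvex s t t₀ hs hst htt₀ := by
    rw [mul_mul_mul_comm, mul_mul_mul_comm c _ c]
    exact mul_le_mul_of_nonneg_left (mul_le_mul_of_lt ha1 hs hst htt₀) (mul_self_nonneg c)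
  intervalIntegrable t ht := by
    simpa using (intervalIntegrable_convolution ha one_pos ht).const_mul c

end riemannLiouvilleKernel

/-- The kernel `t ^ (β - 1) * E_{α,β}(c t ^ α)`; its expansion in Riemann–Liouville kernels is
`∑ₖ cᵏ g_{αk+β}(t)`. -/
noncomputable def mittagLefflerKernel (α β c t : ℝ) : ℝ :=
  t ^ (β - 1) * mittagLefflerReal α β (c * t ^ α)

namespace mittagLefflerKernel

variable {α β γ c μ t : ℝ}

lemma eq_riemannLiouvilleKernel_mul (hβ : 0 < β) (t : ℝ) : mittagLefflerKernel α β c t =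
    riemannLiouvilleKernel β t * (Real.Gamma β * mittagLefflerReal α β (c * t ^ α)) := by
  have := (Real.Gamma_pos_of_pos hβ).ne'
  rw [mittagLefflerKernel, riemannLiouvilleKernel]
  field_simp

lemma continuousOn (hα : 0 < α) (hβ : 0 < β) (c : ℝ) :
    ContinuousOn (mittagLefflerKernel α β c) (Ioi 0) :=
  (continuousOn_id.rpow_const fun _ ht => Or.inl ht.ne').mul
    (continuous_mittagLefflerReal_mul_rpow hα hβ c).continuousOn

lemma eventually_pos (hα : 0 < α) (hβ : 0 < β) (c : ℝ) :
    ∀ᶠ t in 𝓝[>] 0, 0 < mittagLefflerKernel α β c t := by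
  have hzero : 0 < mittagLefflerReal α β (c * 0 ^ α) := by
    rw [Real.zero_rpow hα.ne', mul_zero, mittagLefflerReal_zero]
    exact one_div_pos.2 (Real.Gamma_pos_of_pos hβ)
  filter_upwards [self_mem_nhdsWithin, nhdsWithin_le_nhds
    ((continuous_mittagLefflerReal_mul_rpow hα hβ c).continuousAt.eventually_const_lt hzero)]
    with t ht hpos using mul_pos (Real.rpow_pos_of_pos ht _) hpos

lemma hasSum (hα : 0 < α) (hβ : 0 < β) (c : ℝ) (ht : 0 < t) :
    HasSum (fun k : ℕ => c ^ k * riemannLiouvilleKernel (α * k + β) t)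
      (mittagLefflerKernel α β c t) := by
  have hterm (k : ℕ) : c ^ k * riemannLiouvilleKernel (α * k + β) t =
      t ^ (β - 1) * ((c * t ^ α) ^ k / Real.Gamma (α * k + β)) := by
    have hpow : t ^ (α * k + β - 1) = t ^ (β - 1) * (t ^ α) ^ k := by
      rw [← Real.rpow_mul_natCast ht.le, ← Real.rpow_add ht]
      ring_nf
    rw [riemannLiouvilleKernel, hpow, mul_pow]
    ring
  simp_rw [hterm]
  exact (summable_pow_div_Gamma hα hβ (c * t ^ α)).hasSum.mul_left _

lemma eq_add (hα : 0 < α) (hβ : 0 < β) (c : ℝ) (ht : 0 < t) :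
    mittagLefflerKernel α β c t =
      riemannLiouvilleKernel β t + c * mittagLefflerKernel α (β + α) c t := by
  have htail := (hasSum hα (add_pos hβ hα) c ht).mul_left c
  have hshift : (fun k : ℕ => c * (c ^ k * riemannLiouvilleKernel (α * k + (β + α)) t)) =
      fun k : ℕ => c ^ (k + 1) * riemannLiouvilleKernel (α * (k + 1 : ℕ) + β) t := by
    ext k
    rw [← mul_assoc, ← pow_succ']
    push_cast
    ring_nf
  rw [hshift] at htail
  simpa using (hasSum hα hβ c ht).unique htail.zero_add

lemma setIntegral_pow_mul_convolution (hα : 0 < α) (hβ : 0 < β) (hγ : 0 < γ) (c : ℝ) (ht : 0 < t)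
    (k : ℕ) :
    ∫ s in Ioc 0 t, c ^ k *
      (riemannLiouvilleKernel γ (t - s) * riemannLiouvilleKernel (α * k + β) s) =
      c ^ k * riemannLiouvilleKernel (α * k + (β + γ)) t := by
  rw [integral_const_mul, ← intervalIntegral.integral_of_le ht.le,
    riemannLiouvilleKernel.integral_convolution (by positivity) hγ ht, add_assoc]

lemma setIntegral_norm_pow_mul_convolution (hα : 0 < α) (hβ : 0 < β) (hγ : 0 < γ) (c : ℝ)
    (ht : 0 < t) (k : ℕ) :
    ∫ s in Ioc 0 t, ‖c ^ k *
      (riemannLiouvilleKernel γ (t - s) * riemannLiouvilleKernel (α * k + β) s)‖ =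
      |c| ^ k * riemannLiouvilleKernel (α * k + (β + γ)) t := by
  rw [← setIntegral_pow_mul_convolution hα hβ hγ |c| ht]
  refine setIntegral_congr_fun measurableSet_Ioc fun s hs => ?_
  have hγs := riemannLiouvilleKernel.nonneg hγ (sub_nonneg.2 hs.2)
  have hβs := riemannLiouvilleKernel.nonneg (a := α * k + β) (by positivity) hs.1.le
  simp only [norm_mul, norm_pow, Real.norm_eq_abs, abs_of_nonneg hγs, abs_of_nonneg hβs]

theorem integral_convolution (hα : 0 < α) (hβ : 0 < β) (hγ : 0 < γ) (c : ℝ) (ht : 0 < t) :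
    ∫ s in (0 : ℝ)..t, riemannLiouvilleKernel γ (t - s) * mittagLefflerKernel α β c s =
      mittagLefflerKernel α (β + γ) c t := by
  have hint (k : ℕ) : IntegrableOn (fun s => c ^ k *
      (riemannLiouvilleKernel γ (t - s) * riemannLiouvilleKernel (α * k + β) s)) (Ioc 0 t) :=
    (riemannLiouvilleKernel.intervalIntegrable_convolution (by positivity) hγ ht).1.const_mul _
  have hsum := hasSum_integral_of_summable_integral_norm hint <| by
    simp_rw [setIntegral_norm_pow_mul_convolution hα hβ hγ c ht]
    exact (hasSum hα (add_pos hβ hγ) |c| ht).summable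
  simp_rw [setIntegral_pow_mul_convolution hα hβ hγ c ht] at hsum
  rw [(hasSum hα (add_pos hβ hγ) c ht).unique hsum, intervalIntegral.integral_of_le ht.le]
  refine setIntegral_congr_fun measurableSet_Ioc fun s hs => ?_
  simp_rw [mul_left_comm (c ^ _)]
  exact ((hasSum hα hβ c hs.1).mul_left _).tsum_eq.symm

lemma intervalIntegrable_convolution (hα : 0 < α) (hβ : 0 < β) (hγ : 0 < γ) (c : ℝ) (ht : 0 < t) :
    IntervalIntegrable (fun s => riemannLiouvilleKernel γ (t - s) * mittagLefflerKernel α β c s)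
      volume 0 t := by
  have hcont := (continuous_mittagLefflerReal_mul_rpow hα hβ c).const_mul (Real.Gamma β)
  simp_rw [eq_riemannLiouvilleKernel_mul hβ, ← mul_assoc _ (riemannLiouvilleKernel β _)]
  exact (riemannLiouvilleKernel.intervalIntegrable_convolution hβ hγ ht).mul_continuousOn
    hcont.continuousOn

lemma intervalIntegrable (hα : 0 < α) (hβ : 0 < β) (c : ℝ) (ht : 0 < t) :
    IntervalIntegrable (mittagLefflerKernel α β c) volume 0 t := by
  simpa using intervalIntegrable_convolution hα hβ one_pos c ht

theorem isResolvent (hα : 0 < α) (hμ : 0 < μ) :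
    IsResolvent (fun t => μ * riemannLiouvilleKernel α t)
      (fun t => μ * mittagLefflerKernel α α (-μ) t) where
  continuousOn := continuousOn_const.mul (continuousOn hα hα (-μ))
  eventually_pos := (eventually_pos hα hα (-μ)).mono fun _ ht => mul_pos hμ ht
  intervalIntegrable t ht := by
    simp_rw [mul_mul_mul_comm μ]
    exact (intervalIntegrable_convolution hα hα hα (-μ) ht).const_mul _
  add_integral t ht := by
    simp_rw [mul_mul_mul_comm μ]
    rw [intervalIntegral.integral_const_mul, integral_convolution hα hα hα (-μ) ht,
      eq_add hα hα (-μ) ht]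
    ring

theorem pos (hα : 0 < α) (hα1 : α ≤ 1) (hμ : 0 < μ) (ht : 0 < t) :
    0 < mittagLefflerKernel α α (-μ) t := by
  have hpos : 0 < μ * mittagLefflerKernel α α (-μ) t :=
    IsLogConvexKernel.resolvent_pos (R := fun t => μ * mittagLefflerKernel α α (-μ) t)
      (riemannLiouvilleKernel.isLogConvexKernel hμ hα hα1) (isResolvent hα hμ) ht
  exact pos_of_mul_pos_right hpos hμ.le

theorem integral_le (hα : 0 < α) (hα1 : α ≤ 1) (hμ : 0 < μ) (ht : 0 < t) :
    ∫ s in (0 : ℝ)..t, mittagLefflerKernel α α (-μ) s ≤ 1 / μ := by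
  have hle := (riemannLiouvilleKernel.isLogConvexKernel hμ hα hα1).integral_resolvent_le_one
    (isResolvent hα hμ) ht ((intervalIntegrable hα hα (-μ) ht).const_mul μ)
  rwa [intervalIntegral.integral_const_mul, ← le_div_iff₀' hμ] at hle

lemma integral_pos (hα : 0 < α) (hα1 : α ≤ 1) (hμ : 0 < μ) (ht : 0 < t) :
    0 < ∫ s in (0 : ℝ)..t, mittagLefflerKernel α α (-μ) s :=
  intervalIntegral.intervalIntegral_pos_of_pos_on (intervalIntegrable hα hα (-μ) ht)
    (fun _ hs => pos hα hα1 hμ hs.1) ht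

end mittagLefflerKernel

lemma mittagLefflerReal_one_eq_one_add_mul_integral {α c t : ℝ} (hα : 0 < α) (ht : 0 < t) :
    mittagLefflerReal α 1 (c * t ^ α) =
      1 + c * ∫ s in (0 : ℝ)..t, mittagLefflerKernel α α c s := by
  have hconv := mittagLefflerKernel.integral_convolution hα hα one_pos c ht
  simp only [riemannLiouvilleKernel.one_left, one_mul] at hconv
  rw [hconv, add_comm α 1]
  simpa [mittagLefflerKernel] using mittagLefflerKernel.eq_add hα one_pos c ht

lemma mittagLefflerReal_one_neg_mem_Icc {α x : ℝ} (hα : 0 < α) (hα1 : α ≤ 1) (hx : 0 ≤ x) :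
    mittagLefflerReal α 1 (-x) ∈ Icc 0 1 := by
  rcases hx.eq_or_lt with rfl | hx
  · simp [mittagLefflerReal_zero]
  have heq : mittagLefflerReal α 1 (-x) =
      1 + -x * ∫ s in (0 : ℝ)..1, mittagLefflerKernel α α (-x) s := by
    simpa using mittagLefflerReal_one_eq_one_add_mul_integral (c := -x) hα one_pos
  have hpos := mul_pos hx (mittagLefflerKernel.integral_pos hα hα1 hx one_pos)
  have hle := mittagLefflerKernel.integral_le hα hα1 hx one_pos
  rw [le_div_iff₀' hx] at hle
  exact ⟨by linarith, by linarith⟩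

section BoundedForcing

variable {r f : ℝ → ℝ} {t M : ℝ}

lemma intervalIntegrable_comp_sub_mul_of_bounded (ht : 0 ≤ t) (hr : IntervalIntegrable r volume 0 t)
    (hf : AEStronglyMeasurable f (volume.restrict (Ioo 0 t))) (hM : ∀ τ ∈ Ioo 0 t, |f τ| ≤ M) :
    IntervalIntegrable (fun τ => r (t - τ) * f τ) volume 0 t := by
  have hr_sub : IntervalIntegrable (fun τ => r (t - τ)) volume 0 t := by
    simpa using (hr.comp_sub_left t).symm
  rw [intervalIntegrable_iff_integrableOn_Ioo_of_le ht] at hr_sub ⊢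
  exact hr_sub.mul_bdd hf ((ae_restrict_mem measurableSet_Ioo).mono hM)

lemma abs_integral_comp_sub_mul_le (ht : 0 ≤ t) (hr : IntervalIntegrable r volume 0 t)
    (hr_nonneg : ∀ s ∈ Ioo 0 t, 0 ≤ r s) (hM : ∀ τ ∈ Ioo 0 t, |f τ| ≤ M) :
    |∫ τ in (0 : ℝ)..t, r (t - τ) * f τ| ≤ (∫ s in (0 : ℝ)..t, r s) * M := by
  have hr_sub : IntervalIntegrable (fun τ => r (t - τ)) volume 0 t := by
    simpa using (hr.comp_sub_left t).symm
  have hbound : ∀ᵐ τ, τ ∈ Ioc 0 t → ‖r (t - τ) * f τ‖ ≤ r (t - τ) * M := by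
    filter_upwards [compl_mem_ae_iff.2 (measure_singleton t)] with τ hτt hτ
    have hτ_mem : τ ∈ Ioo 0 t := ⟨hτ.1, hτ.2.lt_of_ne hτt⟩
    have hrτ : 0 ≤ r (t - τ) := hr_nonneg _ ⟨sub_pos.2 hτ_mem.2, sub_lt_self t hτ.1⟩
    rw [norm_mul, Real.norm_of_nonneg hrτ]
    exact mul_le_mul_of_nonneg_left (hM τ hτ_mem) hrτ
  calc |∫ τ in (0 : ℝ)..t, r (t - τ) * f τ| ≤ ∫ τ in (0 : ℝ)..t, r (t - τ) * M :=
        intervalIntegral.norm_integral_le_of_norm_le ht hbound (hr_sub.mul_const M)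
    _ = (∫ s in (0 : ℝ)..t, r s) * M := by
        rw [intervalIntegral.integral_mul_const, intervalIntegral.integral_comp_sub_left r,
          sub_self, sub_zero]

end BoundedForcing

lemma abs_le_iSup_of_isCompact {X : Type*} [TopologicalSpace X] {K : Set X} {f : X → ℝ}
    (hK : IsCompact K) (hf : ContinuousOn f K) {x : X} (hx : x ∈ K) :
    |f x| ≤ ⨆ y : K, |f y| :=
  le_ciSup (f := fun y : K => |f y|)
    (by simpa only [image_eq_range] using hK.bddAbove_image hf.abs) ⟨x, hx⟩

theorem mild_solution_coefficient_bound_general {α μ t M : ℝ} (hα0 : 0 < α) (hα1 : α ≤ 1)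
    (hμ : 0 < μ) (ht : 0 < t) (u₀ : ℝ) {f : ℝ → ℝ}
    (hf : AEStronglyMeasurable f (volume.restrict (Ioo 0 t))) (hM : ∀ τ ∈ Ioo 0 t, |f τ| ≤ M) :
    IntervalIntegrable (fun τ =>
        (t - τ) ^ (α - 1) * mittagLefflerReal α α (-μ * (t - τ) ^ α) * f τ) volume 0 t ∧
      |u₀ * mittagLefflerReal α 1 (-μ * t ^ α) + ∫ τ in (0 : ℝ)..t,
          (t - τ) ^ (α - 1) * mittagLefflerReal α α (-μ * (t - τ) ^ α) * f τ| ≤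
        |u₀| + 1 / μ * M := by
  have hr := mittagLefflerKernel.intervalIntegrable hα0 hα0 (-μ) ht
  have hM_nonneg : 0 ≤ M :=
    (abs_nonneg _).trans (hM (t / 2) ⟨half_pos ht, half_lt_self ht⟩)
  have hinitial : |mittagLefflerReal α 1 (-μ * t ^ α)| ≤ 1 := by
    have hmem := mittagLefflerReal_one_neg_mem_Icc hα0 hα1 (x := μ * t ^ α) (by positivity)
    rw [← neg_mul] at hmem
    exact abs_le.2 ⟨by linarith [hmem.1], hmem.2⟩
  have hforcing : |∫ τ in (0 : ℝ)..t, mittagLefflerKernel α α (-μ) (t - τ) * f τ| ≤ 1 / μ * M :=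
    (abs_integral_comp_sub_mul_le ht.le hr
      (fun s hs => (mittagLefflerKernel.pos hα0 hα1 hμ hs.1).le) hM).trans
      (mul_le_mul_of_nonneg_right (mittagLefflerKernel.integral_le hα0 hα1 hμ ht) hM_nonneg)
  refine ⟨intervalIntegrable_comp_sub_mul_of_bounded ht.le hr hf hM,
    (abs_add_le _ _).trans (add_le_add ?_ hforcing)⟩
  rw [abs_mul]
  exact mul_le_of_le_one_right (abs_nonneg _) hinitial

/-- For `0 < α < 1` there are constants `C₁, C₂ > 0` depending only on `α` such
that for every `T > 0`, `μ > 0`, `u₀ ∈ ℝ` and continuous `f : [0,T] → ℝ`, the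
mild-solution coefficient
`u(t) = u₀ E_{α,1}(−μ tᵅ) + ∫₀ᵗ (t−τ)^{α−1} E_{α,α}(−μ(t−τ)ᵅ) f(τ) dτ`
satisfies `|u(t)| ≤ C₁|u₀| + (C₂/μ) sup_{0≤τ≤T} |f(τ)|` on `(0, T]`. -/
theorem mild_solution_coefficient_bound (α : ℝ) (hα0 : 0 < α) (hα1 : α < 1) :
    ∃ C₁ : ℝ, 0 < C₁ ∧ ∃ C₂ : ℝ, 0 < C₂ ∧
      ∀ T : ℝ, 0 < T → ∀ μ : ℝ, 0 < μ → ∀ u₀ : ℝ, ∀ f : ℝ → ℝ,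
        ContinuousOn f (Set.Icc 0 T) →
        ∀ t ∈ Set.Ioc (0:ℝ) T,
          |u₀ * mittagLefflerReal α 1 (-μ * t ^ α) +
              ∫ τ in (0:ℝ)..t,
                (t - τ) ^ (α - 1) * mittagLefflerReal α α (-μ * (t - τ) ^ α) * f τ|
            ≤ C₁ * |u₀| + (C₂ / μ) * ⨆ τ : Set.Icc (0:ℝ) T, |f τ| := by
  refine ⟨1, one_pos, 1, one_pos, fun T _ μ hμ u₀ f hf t ht => ?_⟩
  have hsub : Ioo 0 t ⊆ Icc 0 T := fun τ hτ => ⟨hτ.1.le, hτ.2.le.trans ht.2⟩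
  simpa only [one_mul] using (mild_solution_coefficient_bound_general hα0 hα1.le hμ ht.1 u₀
    ((hf.mono hsub).aestronglyMeasurable measurableSet_Ioo)
    fun τ hτ => abs_le_iSup_of_isCompact isCompact_Icc hf (hsub hτ)).2
end
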